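/- arXiv:math/0303108 — 4 statements merged into one kernel-verified Lean document; each statement's English description precedes it below -/
import Mathlib

section
/- For every M > 0 there exists a constant C > 0 with the following property: for all real numbers l₁, l₂, l₃ with 0 < lᵢ ≤ M for i = 1, 2, 3, and every real number d ≥ 0 satisfying cosh d = (cosh(l₃/2) + cosh(l₁/2)·cosh(l₂/2)) / (sinh(l₁/2)·sinh(l₂/2)), one has |d − log(1/l₁) − log(1/l₂)| ≤ C. -/
open Real

/-!
Taking logarithms, the hexagon formula becomes additive. For `d ≥ 0`, `log (cosh d)` is `d` up to
`log 2`; for `x > 0`, `log (sinh x)` is `log x` up to `x`; and the logarithm of the numerator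
`cosh c + cosh a * cosh b` is nonnegative and at most `log 2 + |c| + |a| + |b|`.
-/

theorem cosh_le_exp_abs (x : ℝ) : cosh x ≤ exp |x| := by
  rw [← cosh_abs, cosh_eq]
  linarith [exp_le_exp.2 (neg_le_self (abs_nonneg x))]

theorem log_cosh_le_abs (x : ℝ) : log (cosh x) ≤ |x| :=
  (log_le_iff_le_exp (cosh_pos x)).2 (cosh_le_exp_abs x)

theorem abs_le_log_cosh_add_log_two (x : ℝ) : |x| ≤ log (cosh x) + log 2 := by
  rw [← log_mul (cosh_pos x).ne' two_ne_zero, le_log_iff_exp_le (by positivity), cosh_eq]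
  linarith [exp_abs_le x]

theorem sinh_le_mul_exp (x : ℝ) : sinh x ≤ x * exp x := by
  have exp_neg_lower : (1 - 2 * x) * exp x ≤ exp (-x) := calc
    (1 - 2 * x) * exp x ≤ exp (-(2 * x)) * exp x := by
      gcongr
      exact one_sub_le_exp_neg (2 * x)
    _ = exp (-x) := by rw [← exp_add]; ring_nf
  rw [sinh_eq]
  linarith

theorem log_le_log_sinh {x : ℝ} (hx : 0 < x) : log x ≤ log (sinh x) :=
  log_le_log hx (self_le_sinh_iff.2 hx.le)

theorem log_sinh_le_log_add_self {x : ℝ} (hx : 0 < x) : log (sinh x) ≤ log x + x := calc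
  log (sinh x) ≤ log (x * exp x) := log_le_log (sinh_pos_iff.2 hx) (sinh_le_mul_exp x)
  _ = log x + x := by rw [log_mul hx.ne' (exp_ne_zero x), log_exp]

theorem log_cosh_add_cosh_mul_cosh_nonneg (a b c : ℝ) :
    0 ≤ log (cosh c + cosh a * cosh b) :=
  log_nonneg (le_add_of_le_of_nonneg (one_le_cosh c) (by positivity))

theorem log_cosh_add_cosh_mul_cosh_le (a b c : ℝ) :
    log (cosh c + cosh a * cosh b) ≤ log 2 + |c| + |a| + |b| := by
  have hab : 1 ≤ cosh a * cosh b := one_le_mul_of_one_le_of_one_le (one_le_cosh a) (one_le_cosh b)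
  have add_le_two_mul : cosh c + cosh a * cosh b ≤ 2 * (cosh c * (cosh a * cosh b)) := by
    nlinarith [one_le_cosh c]
  calc log (cosh c + cosh a * cosh b)
      ≤ log (2 * (cosh c * (cosh a * cosh b))) := log_le_log (by positivity) add_le_two_mul
    _ = log 2 + (log (cosh c) + (log (cosh a) + log (cosh b))) := by
      rw [log_mul, log_mul, log_mul] <;> positivity
    _ ≤ log 2 + |c| + |a| + |b| := by
      linarith [log_cosh_le_abs a, log_cosh_le_abs b, log_cosh_le_abs c]

theorem abs_add_log_add_log_le_of_cosh_eq {a b c d : ℝ} (ha : 0 < a) (hb : 0 < b) (hd : 0 ≤ d)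
    (h : cosh d = (cosh c + cosh a * cosh b) / (sinh a * sinh b)) :
    |d + log a + log b| ≤ |c| + a + b + 2 * log 2 := by
  have sinh_a_pos : 0 < sinh a := sinh_pos_iff.2 ha
  have sinh_b_pos : 0 < sinh b := sinh_pos_iff.2 hb
  have log_hexagon : log (cosh d) =
      log (cosh c + cosh a * cosh b) - (log (sinh a) + log (sinh b)) := by
    rw [h, log_div (by positivity) (by positivity), log_mul sinh_a_pos.ne' sinh_b_pos.ne']
  have log_cosh_d_le := log_cosh_le_abs d
  have le_log_cosh_d := abs_le_log_cosh_add_log_two d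
  have log_num_le := log_cosh_add_cosh_mul_cosh_le a b c
  rw [abs_of_nonneg hd] at log_cosh_d_le le_log_cosh_d
  rw [abs_of_pos ha, abs_of_pos hb] at log_num_le
  rw [abs_le]
  constructor
  · linarith [log_cosh_add_cosh_mul_cosh_nonneg a b c, log_sinh_le_log_add_self ha,
      log_sinh_le_log_add_self hb, abs_nonneg c, log_pos one_lt_two]
  · linarith [log_le_log_sinh ha, log_le_log_sinh hb]

theorem perpendicular_length_estimate_general {l₁ l₂ l₃ d : ℝ}
    (hl₁ : 0 < l₁) (hl₂ : 0 < l₂) (hd : 0 ≤ d)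
    (h : cosh d = (cosh (l₃ / 2) + cosh (l₁ / 2) * cosh (l₂ / 2)) /
      (sinh (l₁ / 2) * sinh (l₂ / 2))) :
    |d - log (1 / l₁) - log (1 / l₂)| ≤ (l₁ + l₂ + |l₃|) / 2 + 4 * log 2 := by
  have half_length_bound := abs_add_log_add_log_le_of_cosh_eq (half_pos hl₁) (half_pos hl₂) hd h
  rw [log_div hl₁.ne' two_ne_zero, log_div hl₂.ne' two_ne_zero, abs_div, abs_two]
    at half_length_bound
  rw [one_div, one_div, log_inv, log_inv]
  calc |d - -log l₁ - -log l₂|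
      = |(d + (log l₁ - log 2) + (log l₂ - log 2)) + 2 * log 2| := by ring_nf
    _ ≤ |d + (log l₁ - log 2) + (log l₂ - log 2)| + |2 * log 2| := abs_add_le _ _
    _ ≤ (l₁ + l₂ + |l₃|) / 2 + 4 * log 2 := by
      rw [abs_of_pos (by positivity : 0 < 2 * log 2)]
      linarith

/-- In a hyperbolic pair of pants with boundary lengths `l₁, l₂, l₃` bounded
above by `M`, the common perpendicular between the boundary components of
lengths `l₁` and `l₂` has length `d = log(1/l₁) + log(1/l₂) + O(1)`, uniformly. -/
theorem perpendicular_length_estimate (M : ℝ) (hM : 0 < M) :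
    ∃ C : ℝ, 0 < C ∧ ∀ l₁ l₂ l₃ d : ℝ,
      0 < l₁ → l₁ ≤ M → 0 < l₂ → l₂ ≤ M → 0 < l₃ → l₃ ≤ M → 0 ≤ d →
      Real.cosh d = (Real.cosh (l₃ / 2) + Real.cosh (l₁ / 2) * Real.cosh (l₂ / 2)) /
        (Real.sinh (l₁ / 2) * Real.sinh (l₂ / 2)) →
      |d - Real.log (1 / l₁) - Real.log (1 / l₂)| ≤ C := by
  refine ⟨3 * M / 2 + 4 * log 2, by positivity, fun l₁ l₂ l₃ d h₁ h₁M h₂ h₂M h₃ h₃M hd h ↦ ?_⟩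
  linarith [perpendicular_length_estimate_general h₁ h₂ hd h, abs_of_pos h₃]
end

section
/- For every M > 0 there exists a constant C > 0 with the following property: for all real numbers l₁, l₂, l₃ with 0 < lᵢ ≤ M for i = 1, 2, 3, every real number d ≥ 0 satisfying cosh d = (cosh(l₃/2) + cosh(l₁/2)·cosh(l₂/2)) / (sinh(l₁/2)·sinh(l₂/2)), and every real number d' ≥ 0 satisfying cosh(d'/2) = sinh(d)·sinh(l₂/2), one has |d' − 2·log(1/l₁)| ≤ C. -/
open Real

/-!
Cut the pair of pants into two right-angled hexagons with alternate sides `x = l₁/2`, `y = l₂/2`,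
`z = l₃/2`. Eliminating `d` by `cosh² d - sinh² d = 1` turns the two identities into
`(sinh x * cosh (d'/2))² = cosh² x + cosh² y + cosh² z + 2 cosh x cosh y cosh z - 1`. The right-hand
side is at least `4` and increases with the side lengths, so it lies between positive constants,
while `cosh (d'/2)` is comparable to `exp (d'/2)` and `sinh x` to `l₁`. Taking logarithms bounds
`d' + 2 log l₁`.
-/

section HyperbolicEstimates

theorem sinh_le_mul_cosh {x : ℝ} (hx : 0 ≤ x) : sinh x ≤ x * cosh x := by
  rcases hx.eq_or_lt with rfl | hx
  · simp
  obtain ⟨ξ, ⟨hξ, hξx⟩, slope⟩ :=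
    exists_hasDerivAt_eq_slope sinh cosh hx continuous_sinh.continuousOn
      fun t _ => hasDerivAt_sinh t
  have cosh_eq_div : cosh ξ = sinh x / x := by simpa using slope
  have cosh_mono : cosh ξ ≤ cosh x :=
    cosh_le_cosh.2 (abs_le_abs_of_nonneg hξ.le hξx.le)
  rwa [cosh_eq_div, div_le_iff₀' hx] at cosh_mono

theorem log_sinh_le_log_add_log_cosh {x : ℝ} (hx : 0 < x) :
    log (sinh x) ≤ log x + log (cosh x) := by
  rw [← log_mul hx.ne' (cosh_pos x).ne']
  exact log_le_log (sinh_pos_iff.2 hx) (sinh_le_mul_cosh hx.le)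

end HyperbolicEstimates

section RightAngledHexagon

variable {x y z : ℝ}

/-- The negated Gram determinant of a right-angled hexagon with alternate side lengths `x, y, z`:
the outward unit normals of the other three sides have pairwise Lorentzian products
`-cosh x`, `-cosh y`, `-cosh z`. -/
noncomputable def hexagonGram (x y z : ℝ) : ℝ :=
  cosh x ^ 2 + cosh y ^ 2 + cosh z ^ 2 + 2 * (cosh x * cosh y * cosh z) - 1

theorem four_le_hexagonGram (x y z : ℝ) : 4 ≤ hexagonGram x y z := by
  have one_le_sq (t : ℝ) : 1 ≤ cosh t ^ 2 := one_le_pow₀ (one_le_cosh t)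
  have one_le_prod : 1 ≤ cosh x * cosh y * cosh z :=
    one_le_mul_of_one_le_of_one_le
      (one_le_mul_of_one_le_of_one_le (one_le_cosh x) (one_le_cosh y)) (one_le_cosh z)
  unfold hexagonGram
  linarith [one_le_sq x, one_le_sq y, one_le_sq z]

theorem hexagonGram_pos (x y z : ℝ) : 0 < hexagonGram x y z :=
  four_pos.trans_le (four_le_hexagonGram x y z)

theorem log_hexagonGram_nonneg (x y z : ℝ) : 0 ≤ log (hexagonGram x y z) :=
  log_nonneg (le_trans (by norm_num) (four_le_hexagonGram x y z))

theorem hexagonGram_le_hexagonGram {x' y' z' : ℝ} (hx : |x| ≤ |x'|) (hy : |y| ≤ |y'|)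
    (hz : |z| ≤ |z'|) : hexagonGram x y z ≤ hexagonGram x' y' z' := by
  rw [← cosh_le_cosh] at hx hy hz
  unfold hexagonGram
  gcongr

theorem sinh_mul_cosh_sq_eq_hexagonGram {d e : ℝ} (hx : x ≠ 0) (hy : y ≠ 0)
    (hexagon : cosh d = (cosh z + cosh x * cosh y) / (sinh x * sinh y))
    (pentagon : cosh e = sinh d * sinh y) :
    (sinh x * cosh e) ^ 2 = hexagonGram x y z := by
  rw [eq_div_iff (mul_ne_zero (sinh_ne_zero.2 hx) (sinh_ne_zero.2 hy))] at hexagon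
  calc
    (sinh x * cosh e) ^ 2 = (cosh d * (sinh x * sinh y)) ^ 2 - sinh x ^ 2 * sinh y ^ 2 := by
      rw [pentagon, mul_pow (cosh d), cosh_sq d]; ring
    _ = (cosh z + cosh x * cosh y) ^ 2 - (cosh x ^ 2 - 1) * (cosh y ^ 2 - 1) := by
      rw [hexagon, sinh_sq x, sinh_sq y]
    _ = hexagonGram x y z := by unfold hexagonGram; ring

theorem log_hexagonGram_eq {d e : ℝ} (hx : x ≠ 0) (hy : y ≠ 0)
    (hexagon : cosh d = (cosh z + cosh x * cosh y) / (sinh x * sinh y))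
    (pentagon : cosh e = sinh d * sinh y) :
    log (hexagonGram x y z) = 2 * (log (sinh x) + log (cosh e)) := by
  rw [← sinh_mul_cosh_sq_eq_hexagonGram hx hy hexagon pentagon, log_pow,
    log_mul (sinh_ne_zero.2 hx) (cosh_pos e).ne']
  norm_cast

theorem abs_two_mul_add_log_sub_log_hexagonGram_le {d e : ℝ} (hx : 0 < x) (hy : y ≠ 0)
    (he : 0 ≤ e) (hexagon : cosh d = (cosh z + cosh x * cosh y) / (sinh x * sinh y))
    (pentagon : cosh e = sinh d * sinh y) :
    |2 * (e + log x) - log (hexagonGram x y z)| ≤ 2 * (x + log 2) := by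
  have sinh_lower : log x ≤ log (sinh x) := log_le_log hx (self_le_sinh_iff.2 hx.le)
  have sinh_upper : log (sinh x) ≤ log x + x := by
    linarith [log_sinh_le_log_add_log_cosh hx, log_cosh_le_abs x, abs_of_pos hx]
  have cosh_lower : e - log 2 ≤ log (cosh e) := by
    linarith [abs_le_log_cosh_add_log_two e, abs_of_nonneg he]
  have cosh_upper : log (cosh e) ≤ e := (log_cosh_le_abs e).trans_eq (abs_of_nonneg he)
  rw [log_hexagonGram_eq hx.ne' hy hexagon pentagon, abs_le]
  constructor <;> linarith [log_pos one_lt_two]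

end RightAngledHexagon

/-- In a hyperbolic pair of pants with boundary lengths `l₁, l₂, l₃` bounded
above by `M`, the perpendicular arc from the boundary component of length `l₁`
to itself has length `d' = 2·log(1/l₁) + O(1)`, uniformly. -/
theorem self_perpendicular_length_estimate (M : ℝ) (hM : 0 < M) :
    ∃ C : ℝ, 0 < C ∧ ∀ l₁ l₂ l₃ d d' : ℝ,
      0 < l₁ → l₁ ≤ M → 0 < l₂ → l₂ ≤ M → 0 < l₃ → l₃ ≤ M → 0 ≤ d → 0 ≤ d' →
      Real.cosh d = (Real.cosh (l₃ / 2) + Real.cosh (l₁ / 2) * Real.cosh (l₂ / 2)) /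
        (Real.sinh (l₁ / 2) * Real.sinh (l₂ / 2)) →
      Real.cosh (d' / 2) = Real.sinh d * Real.sinh (l₂ / 2) →
      |d' - 2 * Real.log (1 / l₁)| ≤ C := by
  refine ⟨M + 4 * log 2 + log (hexagonGram (M / 2) (M / 2) (M / 2)), ?_, ?_⟩
  · linarith [log_pos one_lt_two, log_hexagonGram_nonneg (M / 2) (M / 2) (M / 2)]
  intro l₁ l₂ l₃ d d' hl₁ hl₁M hl₂ hl₂M hl₃ hl₃M _ hd' hexagon pentagon
  have half_abs_le {l : ℝ} (hl : 0 < l) (hlM : l ≤ M) : |l / 2| ≤ |M / 2| :=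
    abs_le_abs_of_nonneg (by positivity) (by linarith)
  have gram_lower := log_hexagonGram_nonneg (l₁ / 2) (l₂ / 2) (l₃ / 2)
  have gram_upper := log_le_log (hexagonGram_pos _ _ _) <| hexagonGram_le_hexagonGram
    (half_abs_le hl₁ hl₁M) (half_abs_le hl₂ hl₂M) (half_abs_le hl₃ hl₃M)
  have estimate := abs_two_mul_add_log_sub_log_hexagonGram_le (half_pos hl₁) (half_pos hl₂).ne'
    (div_nonneg hd' zero_le_two) hexagon pentagon
  rw [log_div hl₁.ne' two_ne_zero, abs_le] at estimate
  rw [one_div, log_inv, abs_le]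
  constructor <;> linarith [log_pos one_lt_two]
end

section
/- For every θ₀ with 0 < θ₀ ≤ π there exists a constant K > 0 such that: for all real numbers a, b ≥ 0, every θ with θ₀ ≤ θ ≤ π, and every real number c ≥ 0 satisfying cosh c = cosh a · cosh b − sinh a · sinh b · cos θ, one has c > a + b − K. -/
open Real

/-!
The hyperbolic law of cosines exhibits `cosh c` as the average of `cosh (a + b)` and `cosh (a - b)`
with weights `sin² (θ / 2)` and `cos² (θ / 2)`. Keeping the first term only,
`sin² (θ / 2) * exp (a + b) < 2 * cosh c ≤ 2 * exp c`, so `c` falls short of `a + b` by less than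
`log (2 / sin² (θ / 2))`, a bound that decreases as `θ` grows to `π`.
-/

lemma exp_lt_two_mul_cosh (x : ℝ) : exp x < 2 * cosh x := by
  rw [cosh_eq]
  linarith [exp_pos (-x)]

lemma cosh_le_exp_of_nonneg {x : ℝ} (hx : 0 ≤ x) : cosh x ≤ exp x := by
  linarith [cosh_add_sinh x, sinh_nonneg_iff.2 hx]

lemma cosh_mul_cosh_sub_sinh_mul_sinh_mul_cos (a b θ : ℝ) :
    cosh a * cosh b - sinh a * sinh b * cos θ =
      sin (θ / 2) ^ 2 * cosh (a + b) + cos (θ / 2) ^ 2 * cosh (a - b) := by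
  have hcos : cos θ = 1 - 2 * sin (θ / 2) ^ 2 := by
    rw [← cos_two_mul_eq_one_sub, mul_div_cancel₀ θ two_ne_zero]
  rw [cosh_add, cosh_sub, cos_sq', hcos]
  ring

lemma sin_half_sq_mul_cosh_add_le (a b θ : ℝ) :
    sin (θ / 2) ^ 2 * cosh (a + b) ≤ cosh a * cosh b - sinh a * sinh b * cos θ := by
  rw [cosh_mul_cosh_sub_sinh_mul_sinh_mul_cos]
  exact le_add_of_nonneg_right (mul_nonneg (sq_nonneg _) (cosh_pos _).le)

lemma add_lt_add_log_of_cosh_eq {a b c θ : ℝ} (hθ : sin (θ / 2) ≠ 0) (hc : 0 ≤ c)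
    (hlaw : cosh c = cosh a * cosh b - sinh a * sinh b * cos θ) :
    a + b < c + log (2 / sin (θ / 2) ^ 2) := by
  have hsin : 0 < sin (θ / 2) ^ 2 := by positivity
  have hexp : sin (θ / 2) ^ 2 * exp (a + b) < 2 * exp c :=
    calc
      sin (θ / 2) ^ 2 * exp (a + b) < sin (θ / 2) ^ 2 * (2 * cosh (a + b)) := by
        gcongr
        exact exp_lt_two_mul_cosh _
      _ = 2 * (sin (θ / 2) ^ 2 * cosh (a + b)) := by ring
      _ ≤ 2 * cosh c := by
        rw [hlaw]
        gcongr
        exact sin_half_sq_mul_cosh_add_le a b θ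
      _ ≤ 2 * exp c := by
        gcongr
        exact cosh_le_exp_of_nonneg hc
  rw [← exp_lt_exp, exp_add c, exp_log (by positivity), ← mul_div_assoc, lt_div_iff₀ hsin]
  linarith

/-- Thin-triangle estimate: in a hyperbolic triangle with side lengths `a, b, c`
and angle `θ ≥ θ₀ > 0` opposite `c` (hyperbolic law of cosines), one has
`c > a + b − K(θ₀)`. -/
theorem hyperbolic_triangle_thin (θ₀ : ℝ) (hθ₀ : 0 < θ₀) (hθ₀' : θ₀ ≤ Real.pi) :
    ∃ K : ℝ, 0 < K ∧ ∀ a b θ c : ℝ,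
      0 ≤ a → 0 ≤ b → θ₀ ≤ θ → θ ≤ Real.pi → 0 ≤ c →
      Real.cosh c = Real.cosh a * Real.cosh b -
        Real.sinh a * Real.sinh b * Real.cos θ →
      c > a + b - K := by
  have hsin₀ : 0 < sin (θ₀ / 2) := sin_pos_of_pos_of_lt_pi (by linarith) (by linarith)
  refine ⟨log (2 / sin (θ₀ / 2) ^ 2), log_pos ?_, fun a b θ c _ _ hθ hθπ hc hlaw ↦ ?_⟩
  · rw [one_lt_div (by positivity)]
    linarith [sin_sq_le_one (θ₀ / 2)]
  · have hsin : sin (θ₀ / 2) ≤ sin (θ / 2) :=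
      sin_le_sin_of_le_of_le_pi_div_two (by linarith) (by linarith) (by linarith)
    have hlog : log (2 / sin (θ / 2) ^ 2) ≤ log (2 / sin (θ₀ / 2) ^ 2) := by
      have : 0 < sin (θ / 2) := hsin₀.trans_le hsin
      gcongr
    linarith [add_lt_add_log_of_cosh_eq (hsin₀.trans_le hsin).ne' hc hlaw]
end

section
/- Let N ≥ 1, let a₁, …, a_N > 0 and C₁, …, C_N > 0 be real constants, let (sₙ) be a sequence of positive reals with sₙ → 0, and for each i let (u_i(n)) be a sequence of positive reals. Suppose that for some index i₀ the sequence u_{i₀}(n)/sₙ tends either to 0 or to +∞ as n → ∞. Then Σᵢ ( aᵢ·u_i(n)/sₙ + Cᵢ·log(sₙ/u_i(n)) ) → +∞ as n → ∞. -/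
open Filter Real

/-!
For `a, C > 0` the function `x ↦ a * x + C * log x⁻¹` on `(0, ∞)` is bounded below and proper: near
`0` the logarithm blows up while `a * x` vanishes, and near `∞` the linear term dominates the
logarithm. So, as one ratio `u i₀ / s` leaves every compact subset of `(0, ∞)`, its summand tends to
`+∞`, and the remaining summands cannot compensate.
-/

open scoped Topology Asymptotics

theorem tendsto_finset_sum_atTop_of_isBoundedUnder {ι α G : Type*} [AddCommGroup G]
    [PartialOrder G] [IsOrderedAddMonoid G] {l : Filter α} {f : ι → α → G} {t : Finset ι} {i₀ : ι}
    (hi₀ : i₀ ∈ t) (htop : Tendsto (f i₀) l atTop)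
    (hbdd : ∀ i ∈ t, i ≠ i₀ → l.IsBoundedUnder (· ≥ ·) (f i)) :
    Tendsto (fun n => ∑ i ∈ t, f i n) l atTop := by
  classical
  obtain ⟨b, hb⟩ : l.IsBoundedUnder (· ≥ ·) (∑ i ∈ t.erase i₀, f i) :=
    isBoundedUnder_ge_sum _ fun i hi =>
      hbdd i (Finset.mem_of_mem_erase hi) (Finset.ne_of_mem_erase hi)
  refine (tendsto_atTop_add_right_of_le' l b htop (eventually_map.mp hb)).congr fun n => ?_
  rw [Finset.sum_apply, Finset.add_sum_erase t (f · n) hi₀]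

section LinearAddLog

variable {a C : ℝ}

-- The left-hand side is the minimum over `x > 0`, attained at `x = C / a`.
theorem mul_one_add_log_div_le_mul_add_mul_log_inv {x : ℝ} (ha : 0 < a) (hC : 0 < C)
    (hx : 0 < x) : C * (1 + log (a / C)) ≤ a * x + C * log x⁻¹ := by
  have hlog : log (a / C) + log x ≤ a / C * x - 1 := by
    rw [← log_mul (by positivity) hx.ne']
    exact log_le_sub_one_of_pos (by positivity)
  calc
    C * (1 + log (a / C)) ≤ C * (a / C * x - log x) := by gcongr; linarith
    _ = a * x + C * log x⁻¹ := by rw [log_inv]; field_simp; ring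

theorem tendsto_mul_add_mul_log_inv_nhdsGT_zero (a : ℝ) (hC : 0 < C) :
    Tendsto (fun x => a * x + C * log x⁻¹) (𝓝[>] 0) atTop := by
  have hlinear : Tendsto (fun x => a * x) (𝓝[>] 0) (𝓝 (a * 0)) :=
    (continuous_const_mul a).continuousWithinAt
  have hlog : Tendsto (fun x => log x⁻¹) (𝓝[>] 0) atTop :=
    tendsto_log_atTop.comp tendsto_inv_nhdsGT_zero
  exact hlinear.add_atTop (hlog.const_mul_atTop hC)

theorem tendsto_mul_add_mul_log_inv_atTop (ha : 0 < a) (C : ℝ) :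
    Tendsto (fun x => a * x + C * log x⁻¹) atTop atTop := by
  have hlog : (fun x => C * log x⁻¹) =o[atTop] fun x => a * x := by
    simpa only [log_inv, id_eq] using
      (isLittleO_log_id_atTop.neg_left.const_mul_left C).const_mul_right ha.ne'
  exact (Asymptotics.IsEquivalent.refl.add_isLittleO hlog).symm.tendsto_atTop
    (tendsto_id.const_mul_atTop ha)

theorem tendsto_mul_add_mul_log_inv_nhdsGT_zero_sup_atTop (ha : 0 < a) (hC : 0 < C) :
    Tendsto (fun x => a * x + C * log x⁻¹) (𝓝[>] 0 ⊔ atTop) atTop :=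
  (tendsto_mul_add_mul_log_inv_nhdsGT_zero a hC).sup (tendsto_mul_add_mul_log_inv_atTop ha C)

end LinearAddLog

-- The limit along `𝓝 0 ⊔ atTop` also allows a ratio oscillating between small and large values.
theorem sum_ratio_log_tendsto_atTop_general {ι α : Type*} [Fintype ι] {l : Filter α}
    {a C : ι → ℝ} (ha : ∀ i, 0 < a i) (hC : ∀ i, 0 < C i)
    {s : α → ℝ} (hs : ∀ᶠ n in l, 0 < s n)
    {u : ι → α → ℝ} (hu : ∀ i, ∀ᶠ n in l, 0 < u i n) {i₀ : ι}
    (h : Tendsto (fun n => u i₀ n / s n) l (𝓝 0 ⊔ atTop)) :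
    Tendsto (fun n => ∑ i, (a i * (u i n / s n) + C i * log (s n / u i n))) l atTop := by
  have hratio (i : ι) : ∀ᶠ n in l, 0 < u i n / s n := by
    filter_upwards [hu i, hs] with n hun hsn using div_pos hun hsn
  have hends : Tendsto (fun n => u i₀ n / s n) l (𝓝[>] 0 ⊔ atTop) := by
    have hpos : Tendsto (fun n => u i₀ n / s n) l ((𝓝 0 ⊔ atTop) ⊓ 𝓟 (Set.Ioi 0)) :=
      tendsto_inf.2 ⟨h, tendsto_principal.2 (hratio i₀)⟩
    rw [inf_sup_right] at hpos
    exact hpos.mono_right (sup_le_sup_left inf_le_left _)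
  simp only [← inv_div (u _ _)]
  exact tendsto_finset_sum_atTop_of_isBoundedUnder (Finset.mem_univ i₀)
    ((tendsto_mul_add_mul_log_inv_nhdsGT_zero_sup_atTop (ha i₀) (hC i₀)).comp hends)
    fun i _ _ => isBoundedUnder_of_eventually_ge <| (hratio i).mono fun n hn =>
      mul_one_add_log_div_le_mul_add_mul_log_inv (ha i) (hC i) hn

/-- If some `u_{i₀}(n)/sₙ` tends to `0` or `+∞`, then the sum
`Σᵢ (aᵢ·uᵢ(n)/sₙ + Cᵢ·log(sₙ/uᵢ(n)))` tends to `+∞`. -/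
theorem sum_ratio_log_tendsto_atTop (N : ℕ) (hN : 1 ≤ N)
    (a C : Fin N → ℝ) (ha : ∀ i, 0 < a i) (hC : ∀ i, 0 < C i)
    (s : ℕ → ℝ) (hs : ∀ n, 0 < s n) (hs0 : Tendsto s atTop (nhds 0))
    (u : Fin N → ℕ → ℝ) (hu : ∀ i n, 0 < u i n) (i₀ : Fin N)
    (h : Tendsto (fun n => u i₀ n / s n) atTop (nhds 0) ∨
      Tendsto (fun n => u i₀ n / s n) atTop atTop) :
    Tendsto (fun n => ∑ i, (a i * (u i n / s n) + C i * Real.log (s n / u i n)))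
      atTop atTop :=
  sum_ratio_log_tendsto_atTop_general ha hC (.of_forall hs) (fun i => .of_forall (hu i))
    (h.elim (·.mono_right le_sup_left) (·.mono_right le_sup_right))
end
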